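/- With F_t(x)=F(a_t,b_t;c_t;x): (1) for each fixed x∈(0,1], the map t∈[1,∞)↦F_t(x) is strictly increasing, and for each fixed x∈(−∞,0) it is strictly decreasing; (2) for all t≥1 and all x∈(−∞,0], |∂_tF_t(x)|≤−2x·F_t(x)/(t+1)²; (3) there exists C>0 such that |∂_xF(a_n,b_n;c_n;x)|≤C+C|ln(1−x)| for all integers n≥2 and all x∈[0,1); (4) there exists C>0 such that |∂_tF_t(x)| evaluated at integer t=n satisfies |∂_nF_n(x)|≤C·ln n/n² for all integers n≥2 and all x∈[0,1]; (5) there exists C>0 such that |∂²_{xx}F(a_n,b_n;c_n;x)|≤C/(1−x) for all integers n≥2 and all x∈[0,1). -/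

import Mathlib

open MeasureTheory Real Set

/-- Rising factorial (Pochhammer symbol) `(a)_k`. -/
noncomputable def poch (a : ℝ) (k : ℕ) : ℝ := (ascPochhammer ℝ k).eval a

/-- Gauss hypergeometric function `F(a,b;c;x)`: given by Euler's integral representation
when `c > b > 0` (valid for all `x ∈ (-∞,1]`), and by the defining power series otherwise. -/
noncomputable def hyper (a b c x : ℝ) : ℝ :=
  if b < c ∧ 0 < b then
    Real.Gamma c / (Real.Gamma b * Real.Gamma (c - b)) *
      ∫ t in (0:ℝ)..1, t ^ (b - 1) * (1 - t) ^ (c - b - 1) * (1 - x * t) ^ (-a)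
  else
    ∑' k : ℕ, poch a k * poch b k / (poch c k * (Nat.factorial k)) * x ^ k

/-- The coefficient `a_t = (t - √(t²+8))/2`. -/
noncomputable def aCoef (t : ℝ) : ℝ := (t - Real.sqrt (t ^ 2 + 8)) / 2

/-- The coefficient `b_t = (t + √(t²+8))/2`. -/
noncomputable def bCoef (t : ℝ) : ℝ := (t + Real.sqrt (t ^ 2 + 8)) / 2

/-- `F_t(x) = F(a_t, b_t; t+1; x)`. -/
noncomputable def Fhyp (t x : ℝ) : ℝ := hyper (aCoef t) (bCoef t) (t + 1) x

/-- The dispersion function `ζ_n` associated with the quadratic profile `f₀(r) = Ar² + B`. -/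
noncomputable def zetaDisp (A B : ℝ) (n : ℕ) (x : ℝ) : ℝ :=
  Fhyp n x * (1 - x + (A + 2 * B) / (A * ((n : ℝ) + 1)) * x)
    + ∫ τ in (0:ℝ)..1, Fhyp n (τ * x) * τ ^ n * (-1 + 2 * x * τ)

/-!
For `t > 1` Euler's integral represents `F_t`. Differentiating under the integral sign and
integrating by parts give the equation `x (1 - x) F_t'' + (t + 1) (1 - x) F_t' + 2 F_t = 0` and the
signs `F_t > 0`, `F_t' < 0`, `F_t'' ≤ 0` on `(-∞, 1)`; for `t = 1` these hold because
`F_1(x) = 1 - x`. Since `F_t''` is decreasing, the equation at the midpoint `(1 + x) / 2` bounds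
`F_t''(x)` for `0 ≤ x < 1`, and integration bounds `F_t'`.

For `x < 0` and `t < s`, both `F_t - F_s` and `(s - t) (-2 x F_t / (t + 1) ^ 2) - (F_t - F_s)`
vanish at `0` with negative slope, and the two equations show that every positive critical value
is a strict local minimum, so neither has a positive interior maximum; hence both are positive.

For `0 ≤ x < 1`, summation by parts gives `F_t(x) = (1 - x) ∑ P_k(t) x ^ k`, where `P_k(t)` is the
`k`-th partial sum of the Taylor coefficients of `F_t`. It telescopes to the product of
`1 - 2 / ((j + 1) (j + 1 + t))` over `j < k`, so bounds for `P_k(s) - P_k(t)` uniform in `k` pass to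
`F_s - F_t`.
-/

/-- Euler's integral `∫₀¹ s^(p-1) (1-s)^(q-1) (1-xs)^β ds`: the hypergeometric function
`F(-β, p; p+q; x)` up to the factor `B(p, q)`. -/
noncomputable def eulerIntegral (p q β x : ℝ) : ℝ :=
  ∫ s in (0 : ℝ)..1, s ^ (p - 1) * (1 - s) ^ (q - 1) * (1 - x * s) ^ β

section EulerIntegral

variable {p q x s : ℝ}

lemma intervalIntegrable_rpow_mul_one_sub_rpow (hp : 0 < p) (hq : 0 < q) :
    IntervalIntegrable (fun s : ℝ => s ^ (p - 1) * (1 - s) ^ (q - 1)) volume 0 1 := by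
  have h := Complex.betaIntegral_convergent (u := p) (v := q) (by simpa) (by simpa)
  rw [intervalIntegrable_iff_integrableOn_Ioc_of_le zero_le_one] at h ⊢
  refine IntegrableOn.congr_fun h.re (fun s hs => ?_) measurableSet_Ioc
  norm_cast
  rw [← Complex.ofReal_cpow hs.1.le, ← Complex.ofReal_cpow (sub_nonneg.2 hs.2),
    RCLike.re_to_complex, Complex.re_mul_ofReal, Complex.ofReal_re]

lemma integral_rpow_mul_one_sub_rpow (hp : 0 < p) (hq : 0 < q) :
    ∫ s in (0 : ℝ)..1, s ^ (p - 1) * (1 - s) ^ (q - 1) = Gamma p * Gamma q / Gamma (p + q) := by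
  have h := Complex.betaIntegral_convergent (u := p) (v := q) (by simpa) (by simpa)
  rw [intervalIntegrable_iff_integrableOn_Ioc_of_le zero_le_one] at h
  rw [← ProbabilityTheory.beta, ProbabilityTheory.beta_eq_betaIntegralReal p q hp hq,
    Complex.betaIntegral, intervalIntegral.integral_of_le zero_le_one,
    intervalIntegral.integral_of_le zero_le_one, ← RCLike.re_to_complex, ← integral_re h]
  refine setIntegral_congr_fun measurableSet_Ioc fun s hs => ?_
  norm_cast
  rw [← Complex.ofReal_cpow hs.1.le, ← Complex.ofReal_cpow (sub_nonneg.2 hs.2),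
    RCLike.re_to_complex, Complex.re_mul_ofReal, Complex.ofReal_re]

lemma one_sub_mul_pos (hx : x < 1) (hs : s ∈ Icc (0 : ℝ) 1) : 0 < 1 - x * s := by
  rcases le_total x 0 with h | h <;> nlinarith [hs.1, hs.2]

lemma intervalIntegrable_mul_one_sub_mul_rpow {w : ℝ → ℝ}
    (hw : IntervalIntegrable w volume 0 1) (hx : x < 1) (β : ℝ) :
    IntervalIntegrable (fun s => w s * (1 - x * s) ^ β) volume 0 1 := by
  refine hw.mul_continuousOn (ContinuousOn.rpow_const (by fun_prop) fun s hs => Or.inl ?_)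
  rw [uIcc_of_le zero_le_one] at hs
  exact (one_sub_mul_pos hx hs).ne'

lemma hasDerivAt_one_sub_mul_rpow (hx : x < 1) (hs : s ∈ Icc (0 : ℝ) 1) (β : ℝ) :
    HasDerivAt (fun y => (1 - y * s) ^ β) (-β * (s * (1 - x * s) ^ (β - 1))) x := by
  have h : HasDerivAt (fun y => 1 - y * s) (-s) x := by
    simpa using ((hasDerivAt_id x).mul_const s).const_sub 1
  exact (h.rpow_const (Or.inl (one_sub_mul_pos hx hs).ne')).congr_deriv (by ring)

lemma hasDerivAt_integral_mul_one_sub_mul_rpow {w : ℝ → ℝ}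
    (hw : IntervalIntegrable w volume 0 1) (hx : x < 1) (β : ℝ) :
    HasDerivAt (fun y => ∫ s in (0 : ℝ)..1, w s * (1 - y * s) ^ β)
      (∫ s in (0 : ℝ)..1, w s * (-β * (s * (1 - x * s) ^ (β - 1)))) x := by
  obtain ⟨y₀, hxy₀, hy₀⟩ := exists_between hx
  have hderivCont : ContinuousOn (fun z : ℝ × ℝ => -β * (z.2 * (1 - z.1 * z.2) ^ (β - 1)))
      (Icc (x - 1) y₀ ×ˢ Icc 0 1) := by
    refine continuousOn_const.mul (continuousOn_snd.mul
      (ContinuousOn.rpow_const (by fun_prop) fun z hz => Or.inl ?_))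
    exact (one_sub_mul_pos (hz.1.2.trans_lt hy₀) hz.2).ne'
  obtain ⟨B, hB⟩ := (isCompact_Icc.prod isCompact_Icc).exists_bound_of_continuousOn hderivCont
  have hnhds : Ioo (x - 1) y₀ ∈ nhds x := Ioo_mem_nhds (by linarith) hxy₀
  refine (intervalIntegral.hasDerivAt_integral_of_dominated_loc_of_deriv_le
    (F := fun y s => w s * (1 - y * s) ^ β)
    (F' := fun y s => w s * (-β * (s * (1 - y * s) ^ (β - 1))))
    (bound := fun s => |w s| * B) hnhds ?_
    (intervalIntegrable_mul_one_sub_mul_rpow hw hx β) ?_ ?_ (hw.abs.mul_const B) ?_).2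
  · filter_upwards [Iio_mem_nhds hx] with y hy
    exact (intervalIntegrable_mul_one_sub_mul_rpow hw hy β).def'.aestronglyMeasurable
  · have hsec : ContinuousOn (fun s => -β * (s * (1 - x * s) ^ (β - 1))) (uIcc 0 1) := by
      rw [uIcc_of_le zero_le_one]
      exact hderivCont.comp (f := fun s => (x, s)) (by fun_prop)
        fun s hs => ⟨⟨by linarith, hxy₀.le⟩, hs⟩
    exact (hw.mul_continuousOn hsec).def'.aestronglyMeasurable
  · refine Filter.Eventually.of_forall fun s hs y hy => ?_
    rw [uIoc_of_le zero_le_one] at hs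
    rw [norm_mul]
    exact mul_le_mul_of_nonneg_left (hB (y, s) ⟨Ioo_subset_Icc_self hy, Ioc_subset_Icc_self hs⟩)
      (norm_nonneg _)
  · refine Filter.Eventually.of_forall fun s hs y hy => ?_
    rw [uIoc_of_le zero_le_one] at hs
    exact (hasDerivAt_one_sub_mul_rpow (hy.2.trans hy₀) (Ioc_subset_Icc_self hs) β).const_mul _

lemma intervalIntegrable_eulerIntegral (hp : 0 < p) (hq : 0 < q) (hx : x < 1) (β : ℝ) :
    IntervalIntegrable (fun s => s ^ (p - 1) * (1 - s) ^ (q - 1) * (1 - x * s) ^ β)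
      volume 0 1 :=
  intervalIntegrable_mul_one_sub_mul_rpow (intervalIntegrable_rpow_mul_one_sub_rpow hp hq) hx β

lemma eulerIntegral_pos (hp : 0 < p) (hq : 0 < q) (hx : x < 1) (β : ℝ) :
    0 < eulerIntegral p q β x := by
  refine intervalIntegral.intervalIntegral_pos_of_pos_on
    (intervalIntegrable_eulerIntegral hp hq hx β) (fun s hs => ?_) one_pos
  have := hs.1
  have := sub_pos.2 hs.2
  have := one_sub_mul_pos hx (Ioo_subset_Icc_self hs)
  positivity

lemma hasDerivAt_eulerIntegral (hp : 0 < p) (hq : 0 < q) (hx : x < 1) (β : ℝ) :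
    HasDerivAt (eulerIntegral p q β) (-β * eulerIntegral (p + 1) q (β - 1) x) x := by
  refine (hasDerivAt_integral_mul_one_sub_mul_rpow
    (intervalIntegrable_rpow_mul_one_sub_rpow hp hq) hx β).congr_deriv ?_
  rw [eulerIntegral, ← intervalIntegral.integral_const_mul]
  refine intervalIntegral.integral_congr_Ioo_of_le zero_le_one fun s hs => ?_
  simp only [add_sub_right_comm, rpow_add_one hs.1.ne']
  ring

lemma eulerIntegral_add_one_right (hp : 0 < p) (hq : 0 < q) (hx : x < 1) (β : ℝ) :
    eulerIntegral p (q + 1) β x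
      = eulerIntegral p q (β + 1) x - (1 - x) * eulerIntegral (p + 1) q β x := by
  have hp' : 0 < p + 1 := by linarith
  simp only [eulerIntegral]
  rw [← intervalIntegral.integral_const_mul, ← intervalIntegral.integral_sub
    (intervalIntegrable_eulerIntegral hp hq hx (β + 1))
    ((intervalIntegrable_eulerIntegral hp' hq hx β).const_mul (1 - x))]
  refine intervalIntegral.integral_congr_Ioo_of_le zero_le_one fun s hs => ?_
  simp only [add_sub_right_comm, rpow_add_one hs.1.ne', rpow_add_one (sub_pos.2 hs.2).ne',
    rpow_add_one (one_sub_mul_pos hx (Ioo_subset_Icc_self hs)).ne']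
  ring

lemma hasDerivAt_rpow_mul_one_sub_rpow_mul_one_sub_mul_rpow (hx : x < 1)
    (hs : s ∈ Ioo (0 : ℝ) 1) (p q β : ℝ) :
    HasDerivAt (fun s => s ^ p * (1 - s) ^ q * (1 - x * s) ^ β)
      (p * (s ^ (p - 1) * (1 - s) ^ q * (1 - x * s) ^ β)
        - q * (s ^ p * (1 - s) ^ (q - 1) * (1 - x * s) ^ β)
        - β * x * (s ^ p * (1 - s) ^ q * (1 - x * s) ^ (β - 1))) s := by
  have hpow : HasDerivAt (fun s : ℝ => s ^ p) (p * s ^ (p - 1)) s :=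
    hasDerivAt_rpow_const (Or.inl hs.1.ne')
  have hone : HasDerivAt (fun s : ℝ => 1 - s) (-1) s := (hasDerivAt_id s).const_sub 1
  have hlin : HasDerivAt (fun s : ℝ => 1 - x * s) (-x) s := by
    simpa using ((hasDerivAt_id s).const_mul x).const_sub 1
  refine ((hpow.mul (hone.rpow_const (p := q) (Or.inl (sub_pos.2 hs.2).ne'))).mul
    (hlin.rpow_const (p := β)
      (Or.inl (one_sub_mul_pos hx (Ioo_subset_Icc_self hs)).ne'))).congr_deriv ?_
  simp only [Pi.mul_apply]
  ring

lemma eulerIntegral_integration_by_parts (hp : 0 < p) (hq : 0 < q) (hx : x < 1) (β : ℝ) :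
    p * eulerIntegral p (q + 1) β x - q * eulerIntegral (p + 1) q β x
      - β * x * eulerIntegral (p + 1) (q + 1) (β - 1) x = 0 := by
  have hp' : 0 < p + 1 := by linarith
  have hq' : 0 < q + 1 := by linarith
  have hcont : ContinuousOn (fun s => s ^ p * (1 - s) ^ q * (1 - x * s) ^ β) (Icc 0 1) :=
    ((ContinuousOn.rpow_const (by fun_prop) fun _ _ => Or.inr hp.le).mul
      (ContinuousOn.rpow_const (by fun_prop) fun _ _ => Or.inr hq.le)).mul
      (ContinuousOn.rpow_const (by fun_prop) fun s hs => Or.inl (one_sub_mul_pos hx hs).ne')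
  have i₁ := (intervalIntegrable_eulerIntegral hp hq' hx β).const_mul p
  have i₂ := (intervalIntegrable_eulerIntegral hp' hq hx β).const_mul q
  have i₃ := (intervalIntegrable_eulerIntegral hp' hq' hx (β - 1)).const_mul (β * x)
  simp only [eulerIntegral, ← intervalIntegral.integral_const_mul]
  rw [← intervalIntegral.integral_sub i₁ i₂, ← intervalIntegral.integral_sub (i₁.sub i₂) i₃,
    intervalIntegral.integral_eq_sub_of_hasDerivAt_of_le zero_le_one hcont (fun s hs => ?_)
      ((i₁.sub i₂).sub i₃)]
  · simp [zero_rpow hp.ne', zero_rpow hq.ne']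
  · simpa only [add_sub_cancel_right] using
      hasDerivAt_rpow_mul_one_sub_rpow_mul_one_sub_mul_rpow hx hs p q β

lemma eulerIntegral_ode (hp : 0 < p) (hq : 0 < q) (hx : x < 1) (β : ℝ) :
    x * (1 - x) * (β - 1) * eulerIntegral (p + 2) q (β - 2) x
      - (p + q - (p - β + 1) * x) * eulerIntegral (p + 1) q (β - 1) x
      + p * eulerIntegral p q β x = 0 := by
  have hparts := eulerIntegral_integration_by_parts hp hq hx (β - 1)
  have h₀ := eulerIntegral_add_one_right hp hq hx (β - 1)
  have h₁ := eulerIntegral_add_one_right (show 0 < p + 1 by linarith) hq hx (β - 2)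
  rw [sub_add_cancel] at h₀
  rw [show β - 2 + 1 = β - 1 by ring, show p + 1 + 1 = p + 2 by ring] at h₁
  rw [show β - 1 - 1 = β - 2 by ring] at hparts
  linear_combination hparts - p * h₀ + (β - 1) * x * h₁

end EulerIntegral

section Hyper

variable {a b c x : ℝ}

lemma hyper_eq_eulerIntegral (hb : 0 < b) (hbc : b < c) (a x : ℝ) :
    hyper a b c x = Gamma c / (Gamma b * Gamma (c - b)) * eulerIntegral b (c - b) (-a) x := by
  rw [hyper, if_pos ⟨hbc, hb⟩, eulerIntegral]

lemma Gamma_div_Gamma_mul_Gamma_pos (hb : 0 < b) (hbc : b < c) :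
    0 < Gamma c / (Gamma b * Gamma (c - b)) :=
  div_pos (Gamma_pos_of_pos (hb.trans hbc))
    (mul_pos (Gamma_pos_of_pos hb) (Gamma_pos_of_pos (sub_pos.2 hbc)))

lemma hyper_pos (hb : 0 < b) (hbc : b < c) (hx : x < 1) (a : ℝ) : 0 < hyper a b c x := by
  rw [hyper_eq_eulerIntegral hb hbc]
  exact mul_pos (Gamma_div_Gamma_mul_Gamma_pos hb hbc)
    (eulerIntegral_pos hb (sub_pos.2 hbc) hx (-a))

lemma hyper_zero_right (hb : 0 < b) (hbc : b < c) (a : ℝ) : hyper a b c 0 = 1 := by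
  have hc := Gamma_pos_of_pos (hb.trans hbc)
  have := Gamma_pos_of_pos hb
  have hcb := Gamma_pos_of_pos (sub_pos.2 hbc)
  have hE : eulerIntegral b (c - b) (-a) 0 = Gamma b * Gamma (c - b) / Gamma c := by
    simpa [eulerIntegral] using integral_rpow_mul_one_sub_rpow hb (sub_pos.2 hbc)
  rw [hyper_eq_eulerIntegral hb hbc, hE]
  field_simp

lemma hyper_zero_left (b c x : ℝ) : hyper 0 b c x = 1 := by
  by_cases h : b < c ∧ 0 < b
  · rw [← hyper_zero_right h.2 h.1 0]
    simp [hyper_eq_eulerIntegral h.2 h.1, eulerIntegral]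
  · rw [hyper, if_neg h, tsum_eq_single 0 fun k hk => ?_]
    · simp [poch]
    · simp [poch, hk]

lemma hyper_add_one_eq_eulerIntegral (hb : 0 < b) (hbc : b < c) (a x : ℝ) :
    b * hyper (a + 1) (b + 1) (c + 1) x
      = c * (Gamma c / (Gamma b * Gamma (c - b)))
        * eulerIntegral (b + 1) (c - b) (-a - 1) x := by
  have hb' := (Gamma_pos_of_pos hb).ne'
  have hcb := (Gamma_pos_of_pos (sub_pos.2 hbc)).ne'
  rw [hyper_eq_eulerIntegral (by linarith) (by linarith), add_sub_add_right_eq_sub, neg_add',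
    Gamma_add_one hb.ne', Gamma_add_one (hb.trans hbc).ne']
  field_simp

lemma hasDerivAt_hyper (hb : 0 < b) (hbc : b < c) (hx : x < 1) (a : ℝ) :
    HasDerivAt (hyper a b c) (a * b / c * hyper (a + 1) (b + 1) (c + 1) x) x := by
  have hc := (hb.trans hbc).ne'
  rw [funext (hyper_eq_eulerIntegral hb hbc a)]
  refine ((hasDerivAt_eulerIntegral hb (sub_pos.2 hbc) hx (-a)).const_mul _).congr_deriv ?_
  have h := hyper_add_one_eq_eulerIntegral hb hbc a x
  field_simp at h ⊢
  linear_combination -a * h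

lemma hyper_ode (hb : 0 < b) (hbc : b < c) (hx : x < 1) (a : ℝ) :
    x * (1 - x) * (a * b / c * ((a + 1) * (b + 1) / (c + 1) * hyper (a + 2) (b + 2) (c + 2) x))
      + (c - (a + b + 1) * x) * (a * b / c * hyper (a + 1) (b + 1) (c + 1) x)
      - a * b * hyper a b c x = 0 := by
  have hc := (hb.trans hbc).ne'
  have hc1 : c + 1 ≠ 0 := by linarith
  set K := Gamma c / (Gamma b * Gamma (c - b)) with hK
  have hode := eulerIntegral_ode hb (sub_pos.2 hbc) hx (-a)
  have h₀ : hyper a b c x = K * eulerIntegral b (c - b) (-a) x :=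
    hyper_eq_eulerIntegral hb hbc a x
  have h₁ : b * hyper (a + 1) (b + 1) (c + 1) x
      = c * K * eulerIntegral (b + 1) (c - b) (-a - 1) x :=
    hyper_add_one_eq_eulerIntegral hb hbc a x
  have h₂ : b * (b + 1) * hyper (a + 2) (b + 2) (c + 2) x
      = c * (c + 1) * K * eulerIntegral (b + 2) (c - b) (-a - 2) x := by
    have h := hyper_add_one_eq_eulerIntegral (b := b + 1) (c := c + 1) (by linarith)
      (by linarith) (a + 1) x
    have hK' : b * (Gamma (c + 1) / (Gamma (b + 1) * Gamma (c - b))) = c * K := by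
      rw [Gamma_add_one hb.ne', Gamma_add_one hc, hK]
      field_simp
    rw [add_sub_add_right_eq_sub, show a + 1 + 1 = a + 2 by ring, show b + 1 + 1 = b + 2 by ring,
      show c + 1 + 1 = c + 2 by ring, show -(a + 1) - 1 = -a - 2 by ring] at h
    linear_combination b * h + (c + 1) * eulerIntegral (b + 2) (c - b) (-a - 2) x * hK'
  field_simp
  linear_combination x * (1 - x) * a * (a + 1) * h₂
    + (c - (a + b + 1) * x) * (c + 1) * a * h₁ - c * (c + 1) * a * b * h₀
    - c * (c + 1) * K * a * hode

lemma monotoneOn_hyper (ha : 0 ≤ a) (hb : 0 < b) (hbc : b < c) :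
    MonotoneOn (hyper a b c) (Iio 1) := by
  refine monotoneOn_of_hasDerivWithinAt_nonneg (convex_Iio 1)
    (fun x hx => (hasDerivAt_hyper hb hbc hx a).continuousAt.continuousWithinAt)
    (fun x hx => (hasDerivAt_hyper hb hbc (mem_Iio.1 (interior_subset hx)) a).hasDerivWithinAt)
    fun x hx => ?_
  have := hyper_pos (b := b + 1) (c := c + 1) (by linarith) (by linarith)
    (mem_Iio.1 (interior_subset hx)) (a + 1)
  have := hb.trans hbc
  positivity

lemma continuousOn_hyper (ha : a ≤ 0) (hb : 0 < b) (hbc : b < c) :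
    ContinuousOn (hyper a b c) (Iic 1) := by
  have hw := intervalIntegrable_rpow_mul_one_sub_rpow hb (sub_pos.2 hbc)
  have hpow : Continuous fun y : ℝ => y ^ (-a) :=
    continuous_id.rpow_const fun _ => Or.inr (neg_nonneg.2 ha)
  intro x _
  rw [funext (hyper_eq_eulerIntegral hb hbc a)]
  refine ContinuousWithinAt.const_mul (intervalIntegral.continuousWithinAt_of_dominated_interval
    (bound := fun s => |s ^ (b - 1) * (1 - s) ^ (c - b - 1)| * (2 + |x|) ^ (-a)) ?_ ?_ ?_ ?_) _
  · refine Filter.Eventually.of_forall fun y => ?_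
    exact (hw.mul_continuousOn (hpow.comp (by fun_prop)).continuousOn).def'.aestronglyMeasurable
  · filter_upwards [self_mem_nhdsWithin,
      mem_nhdsWithin_of_mem_nhds (Ioi_mem_nhds (sub_one_lt x))] with y hy hxy
    refine Filter.Eventually.of_forall fun s hs => ?_
    rw [uIoc_of_le zero_le_one] at hs
    have hys : y * s ≤ 1 := by nlinarith [hs.1, hs.2, mem_Iic.1 hy]
    have hys' : -(1 + |x|) ≤ y * s := by
      have := neg_abs_le x
      nlinarith [hs.1, hs.2, mem_Ioi.1 hxy, abs_nonneg x]
    rw [norm_mul, norm_eq_abs, norm_eq_abs, abs_of_nonneg (rpow_nonneg (by linarith) _)]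
    gcongr
    · linarith
    · linarith
  · exact hw.abs.mul_const _
  · refine Filter.Eventually.of_forall fun s _ => (Continuous.continuousWithinAt ?_)
    exact continuous_const.mul (hpow.comp (by fun_prop))

end Hyper

/-- The `k`-th Taylor coefficient at `0` of `F(a, b; c; ·)`. -/
noncomputable def hyperCoeff (a b c : ℝ) (k : ℕ) : ℝ :=
  poch a k * poch b k / (poch c k * (Nat.factorial k))

section PowerSeries

variable {a b c x : ℝ}

lemma poch_zero (a : ℝ) : poch a 0 = 1 := by simp [poch]

lemma poch_succ (a : ℝ) (k : ℕ) : poch a (k + 1) = poch a k * (a + k) := by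
  rw [poch, ascPochhammer_succ_eval, poch]

lemma poch_succ_left (a : ℝ) (k : ℕ) : poch a (k + 1) = a * poch (a + 1) k := by
  simp [poch, ascPochhammer_succ_left]

lemma poch_pos (ha : 0 < a) (k : ℕ) : 0 < poch a k := ascPochhammer_pos k a ha

lemma Gamma_add_natCast (ha : 0 < a) (k : ℕ) : Gamma (a + k) = poch a k * Gamma a := by
  induction k with
  | zero => simp [poch_zero]
  | succ k ih =>
    rw [Nat.cast_succ, ← add_assoc, Gamma_add_one (by positivity), ih, poch_succ]
    ring

lemma hasSum_one_sub_rpow (a : ℝ) (hx : |x| < 1) :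
    HasSum (fun k : ℕ => poch a k / Nat.factorial k * x ^ k) ((1 - x) ^ (-a)) := by
  have h := (one_div_one_sub_rpow_hasFPowerSeriesOnBall_zero a).hasSum (y := x) (by
    simpa [enorm_eq_nnnorm, ← NNReal.coe_lt_coe] using hx)
  rw [zero_add, one_div, ← rpow_neg (by linarith [(abs_lt.1 hx).2])] at h
  convert! h using 2 with k
  have hchoose : poch a k = Nat.factorial k * Ring.choose (a + k - 1) k := by
    rw [← Ring.multichoose_eq, ← nsmul_eq_mul, Ring.factorial_nsmul_multichoose_eq_ascPochhammer,
      Polynomial.ascPochhammer_smeval_eq_eval, poch]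
  rw [hchoose, mul_div_cancel_left₀ _ (by positivity)]
  simp [mul_comm]

lemma hasSum_integral_mul_comp_mul {w f : ℝ → ℝ} {d : ℕ → ℝ}
    (hw : IntervalIntegrable w volume 0 1)
    (hf : ∀ y, |y| < 1 → HasSum (fun k => d k * y ^ k) (f y)) (hx : |x| < 1) :
    HasSum (fun k => (∫ s in (0 : ℝ)..1, w s * s ^ k) * (d k * x ^ k))
      (∫ s in (0 : ℝ)..1, w s * f (x * s)) := by
  have habs : ∀ s ∈ Ioc (0 : ℝ) 1, |x * s| ≤ |x| := fun s hs => by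
    rw [abs_mul, abs_of_pos hs.1]
    exact mul_le_of_le_one_right (abs_nonneg x) hs.2
  have key := intervalIntegral.hasSum_integral_of_dominated_convergence (μ := volume)
    (a := 0) (b := 1) (F := fun k s => w s * (d k * (x * s) ^ k)) (f := fun s => w s * f (x * s))
    (fun k s => |w s| * |d k * x ^ k|) ?_ ?_ ?_ ?_ ?_
  · convert! key using 2 with k
    rw [← intervalIntegral.integral_mul_const]
    exact intervalIntegral.integral_congr fun s _ => by ring
  · exact fun k => (hw.mul_continuousOn (by fun_prop)).def'.aestronglyMeasurable
  · refine fun k => Filter.Eventually.of_forall fun s hs => ?_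
    rw [uIoc_of_le zero_le_one] at hs
    rw [norm_mul, norm_eq_abs, norm_eq_abs, abs_mul (d k), abs_mul (d k), abs_pow, abs_pow]
    have := habs s hs
    gcongr
  · exact Filter.Eventually.of_forall fun s _ => (hf x hx).summable.abs.mul_left _
  · simp_rw [tsum_mul_left]
    exact hw.abs.mul_const _
  · refine Filter.Eventually.of_forall fun s hs => ?_
    rw [uIoc_of_le zero_le_one] at hs
    exact (hf _ ((habs s hs).trans_lt hx)).mul_left _

lemma integral_rpow_mul_one_sub_rpow_mul_pow (hb : 0 < b) (hbc : b < c) (k : ℕ) :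
    ∫ s in (0 : ℝ)..1, s ^ (b - 1) * (1 - s) ^ (c - b - 1) * s ^ k
      = Gamma (b + k) * Gamma (c - b) / Gamma (c + k) := by
  have h := integral_rpow_mul_one_sub_rpow (p := b + k) (by positivity) (sub_pos.2 hbc)
  rw [show b + k + (c - b) = c + k by ring] at h
  rw [← h]
  refine intervalIntegral.integral_congr_Ioo_of_le zero_le_one fun s hs => ?_
  simp only [add_sub_right_comm, rpow_add_natCast hs.1.ne']
  ring

lemma hasSum_hyper (hb : 0 < b) (hbc : b < c) (hx : |x| < 1) (a : ℝ) :
    HasSum (fun k => hyperCoeff a b c k * x ^ k) (hyper a b c x) := by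
  have hc := hb.trans hbc
  rw [hyper_eq_eulerIntegral hb hbc]
  refine ((hasSum_integral_mul_comp_mul
    (intervalIntegrable_rpow_mul_one_sub_rpow hb (sub_pos.2 hbc))
    (fun y hy => hasSum_one_sub_rpow a hy) hx).mul_left _).congr_fun fun k => ?_
  have := (Gamma_pos_of_pos hb).ne'
  have := (Gamma_pos_of_pos hc).ne'
  have := (Gamma_pos_of_pos (sub_pos.2 hbc)).ne'
  have := (poch_pos hc k).ne'
  rw [integral_rpow_mul_one_sub_rpow_mul_pow hb hbc, Gamma_add_natCast hb, Gamma_add_natCast hc,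
    hyperCoeff]
  field_simp

lemma sum_range_hyperCoeff (hc : 0 < c) (hcab : c = a + b + 1) (k : ℕ) :
    ∑ j ∈ Finset.range (k + 1), hyperCoeff a b c j = hyperCoeff (a + 1) (b + 1) c k := by
  induction k with
  | zero => simp [hyperCoeff, poch_zero]
  | succ k ih =>
    have := (poch_pos hc k).ne'
    have : c + k ≠ 0 := by positivity
    rw [Finset.sum_range_succ, ih, hyperCoeff, hyperCoeff, hyperCoeff, poch_succ_left a,
      poch_succ_left b, poch_succ c, poch_succ (a + 1), poch_succ (b + 1), Nat.factorial_succ]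
    push_cast
    field_simp
    rw [hcab]
    ring

lemma hyperCoeff_eq_prod (a b c : ℝ) (k : ℕ) :
    hyperCoeff a b c k = ∏ j ∈ Finset.range k, (a + j) * (b + j) / ((c + j) * (j + 1)) := by
  induction k with
  | zero => simp [hyperCoeff, poch_zero]
  | succ k ih =>
    rw [Finset.prod_range_succ, ← ih, hyperCoeff, hyperCoeff, poch_succ, poch_succ, poch_succ,
      div_mul_div_comm, Nat.factorial_succ]
    push_cast
    ring

lemma hasSum_hyperCoeff_neg_one (b c x : ℝ) :
    HasSum (fun k => hyperCoeff (-1) b c k * x ^ k) (1 - b / c * x) := by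
  have hzero : ∀ k ∉ Finset.range 2, hyperCoeff (-1) b c k * x ^ k = 0 := fun k hk => by
    have hk1 : 1 ∈ Finset.range k := by
      rw [Finset.mem_range] at hk ⊢
      omega
    rw [hyperCoeff_eq_prod, Finset.prod_eq_zero hk1 (by simp), zero_mul]
  have hsum : ∑ k ∈ Finset.range 2, hyperCoeff (-1) b c k * x ^ k = 1 - b / c * x := by
    simp [Finset.sum_range_succ, hyperCoeff_eq_prod]
    ring
  exact hsum ▸ hasSum_sum_of_ne_finset_zero hzero

lemma hasSum_sum_range_mul_pow {d : ℕ → ℝ} {A : ℝ} (hd : HasSum (fun k => d k * x ^ k) A)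
    (hx : |x| < 1) :
    HasSum (fun k => (∑ j ∈ Finset.range (k + 1), d j) * x ^ k) (A * (1 - x)⁻¹) := by
  have hgeom := hasSum_geometric_of_abs_lt_one hx
  have h := hasSum_sum_range_mul_of_summable_norm hd.summable.norm hgeom.summable.norm
  rw [hd.tsum_eq, hgeom.tsum_eq] at h
  refine h.congr_fun fun k => ?_
  rw [Finset.sum_mul]
  refine Finset.sum_congr rfl fun j hj => ?_
  rw [mul_assoc, ← pow_add, Nat.add_sub_cancel' (Finset.mem_range_succ_iff.1 hj)]

end PowerSeries

section FhypRegularity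

variable {t x : ℝ}

lemma aCoef_add_bCoef (t : ℝ) : aCoef t + bCoef t = t := by
  unfold aCoef bCoef
  ring

lemma aCoef_mul_bCoef (t : ℝ) : aCoef t * bCoef t = -2 := by
  have := sq_sqrt (show 0 ≤ t ^ 2 + 8 by positivity)
  unfold aCoef bCoef
  linear_combination -this / 4

lemma aCoef_add_one_mul_bCoef_add_one (t : ℝ) : (aCoef t + 1) * (bCoef t + 1) = t - 1 := by
  linear_combination aCoef_mul_bCoef t + aCoef_add_bCoef t

lemma aCoef_one : aCoef 1 = -1 := by
  have : √(1 ^ 2 + 8) = 3 := by rw [sqrt_eq_iff_mul_self_eq] <;> norm_num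
  rw [aCoef, this]
  norm_num

lemma bCoef_one : bCoef 1 = 2 := by
  linarith [aCoef_add_bCoef 1, aCoef_one]

lemma aCoef_neg (t : ℝ) : aCoef t < 0 := by
  have : t < √(t ^ 2 + 8) := lt_sqrt_of_sq_lt (by linarith)
  unfold aCoef
  linarith

lemma bCoef_pos (t : ℝ) : 0 < bCoef t := by
  nlinarith [aCoef_neg t, aCoef_mul_bCoef t]

lemma neg_one_lt_aCoef (ht : 1 < t) : -1 < aCoef t := by
  have : √(t ^ 2 + 8) < t + 2 := by
    rw [sqrt_lt' (by linarith)]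
    nlinarith
  unfold aCoef
  linarith

lemma bCoef_lt_add_one (ht : 1 < t) : bCoef t < t + 1 := by
  linarith [aCoef_add_bCoef t, neg_one_lt_aCoef ht]

lemma Fhyp_one (x : ℝ) : Fhyp 1 x = 1 - x := by
  rw [Fhyp, aCoef_one, bCoef_one, hyper, if_neg (by norm_num)]
  exact (hasSum_hyperCoeff_neg_one 2 (1 + 1) x).tsum_eq.trans (by norm_num)

lemma hasSum_Fhyp (ht : 1 ≤ t) (hx : |x| < 1) :
    HasSum (fun k => hyperCoeff (aCoef t) (bCoef t) (t + 1) k * x ^ k) (Fhyp t x) := by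
  rcases ht.eq_or_lt with rfl | ht
  · rw [Fhyp_one, aCoef_one, bCoef_one]
    convert! hasSum_hyperCoeff_neg_one 2 (1 + 1) x using 1
    norm_num
  · exact hasSum_hyper (bCoef_pos t) (bCoef_lt_add_one ht) hx (aCoef t)

/-- The derivative `∂ₓF_t`, as a multiple of the contiguous function
`F(a_t + 1, b_t + 1; t + 2; ·)`. -/
noncomputable def dFhyp (t x : ℝ) : ℝ :=
  -(2 / (t + 1)) * hyper (aCoef t + 1) (bCoef t + 1) (t + 2) x

/-- The second derivative `∂²ₓₓF_t`, as a multiple of `F(a_t + 2, b_t + 2; t + 3; ·)`. -/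
noncomputable def d2Fhyp (t x : ℝ) : ℝ :=
  -(2 * (t - 1) / ((t + 1) * (t + 2))) * hyper (aCoef t + 2) (bCoef t + 2) (t + 3) x

lemma dFhyp_one (x : ℝ) : dFhyp 1 x = -1 := by
  rw [dFhyp, aCoef_one, neg_add_cancel, hyper_zero_left]
  norm_num

lemma d2Fhyp_one (x : ℝ) : d2Fhyp 1 x = 0 := by simp [d2Fhyp]

lemma hasDerivAt_Fhyp (ht : 1 ≤ t) (hx : x < 1) : HasDerivAt (Fhyp t) (dFhyp t x) x := by
  rcases ht.eq_or_lt with rfl | ht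
  · rw [funext Fhyp_one, dFhyp_one]
    exact (hasDerivAt_id x).const_sub 1
  · refine (hasDerivAt_hyper (bCoef_pos t) (bCoef_lt_add_one ht) hx (aCoef t)).congr_deriv ?_
    rw [dFhyp, aCoef_mul_bCoef, neg_div, show t + 1 + 1 = t + 2 by ring]

lemma hasDerivAt_dFhyp (ht : 1 ≤ t) (hx : x < 1) : HasDerivAt (dFhyp t) (d2Fhyp t x) x := by
  rcases ht.eq_or_lt with rfl | ht
  · rw [funext dFhyp_one, d2Fhyp_one]
    exact hasDerivAt_const x (-1)
  · have hb := bCoef_pos t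
    have hbt := bCoef_lt_add_one ht
    refine ((hasDerivAt_hyper (b := bCoef t + 1) (c := t + 2) (by linarith) (by linarith) hx
      (aCoef t + 1)).const_mul (-(2 / (t + 1)))).congr_deriv ?_
    rw [d2Fhyp, aCoef_add_one_mul_bCoef_add_one, show t + 2 + 1 = t + 3 by ring,
      add_assoc (aCoef t), add_assoc (bCoef t), one_add_one_eq_two]
    field_simp

lemma Fhyp_zero_right (ht : 1 ≤ t) : Fhyp t 0 = 1 := by
  rcases ht.eq_or_lt with rfl | ht
  · rw [Fhyp_one, sub_zero]
  · exact hyper_zero_right (bCoef_pos t) (bCoef_lt_add_one ht) (aCoef t)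

lemma Fhyp_pos (ht : 1 ≤ t) (hx : x < 1) : 0 < Fhyp t x := by
  rcases ht.eq_or_lt with rfl | ht
  · rw [Fhyp_one]
    linarith
  · exact hyper_pos (bCoef_pos t) (bCoef_lt_add_one ht) hx (aCoef t)

lemma dFhyp_neg (ht : 1 ≤ t) (hx : x < 1) : dFhyp t x < 0 := by
  rcases ht.eq_or_lt with rfl | ht
  · rw [dFhyp_one]
    norm_num
  · have hb := bCoef_pos t
    have hbt := bCoef_lt_add_one ht
    have := hyper_pos (b := bCoef t + 1) (c := t + 2) (by linarith) (by linarith) hx (aCoef t + 1)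
    rw [dFhyp, neg_mul, neg_lt_zero]
    positivity

lemma antitoneOn_d2Fhyp (ht : 1 ≤ t) : AntitoneOn (d2Fhyp t) (Iio 1) := by
  rcases ht.eq_or_lt with rfl | ht
  · rw [funext d2Fhyp_one]
    exact antitoneOn_const
  · intro x hx y hy hxy
    have ha := neg_one_lt_aCoef ht
    have hb := bCoef_pos t
    have hbt := bCoef_lt_add_one ht
    have hmono := monotoneOn_hyper (a := aCoef t + 2) (b := bCoef t + 2) (c := t + 3)
      (by linarith) (by linarith) (by linarith) hx hy hxy
    have : 0 ≤ t - 1 := by linarith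
    rw [d2Fhyp, d2Fhyp]
    exact mul_le_mul_of_nonpos_left hmono (neg_nonpos.2 (by positivity))

lemma d2Fhyp_nonpos (ht : 1 ≤ t) (hx : x < 1) : d2Fhyp t x ≤ 0 := by
  rcases ht.eq_or_lt with rfl | ht
  · exact (d2Fhyp_one x).le
  · have hb := bCoef_pos t
    have hbt := bCoef_lt_add_one ht
    have := hyper_pos (b := bCoef t + 2) (c := t + 3) (by linarith) (by linarith) hx (aCoef t + 2)
    have : 0 ≤ t - 1 := by linarith
    rw [d2Fhyp, neg_mul, neg_nonpos]
    positivity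

lemma Fhyp_ode (ht : 1 ≤ t) (hx : x < 1) :
    x * (1 - x) * d2Fhyp t x + (t + 1) * (1 - x) * dFhyp t x + 2 * Fhyp t x = 0 := by
  rcases ht.eq_or_lt with rfl | ht
  · rw [Fhyp_one, dFhyp_one, d2Fhyp_one]
    ring
  · have hode := hyper_ode (bCoef_pos t) (bCoef_lt_add_one ht) hx (aCoef t)
    rw [← Fhyp, aCoef_add_one_mul_bCoef_add_one, aCoef_mul_bCoef, aCoef_add_bCoef,
      show t + 1 + 1 = t + 2 by ring, show t + 1 + 2 = t + 3 by ring] at hode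
    rw [d2Fhyp, dFhyp]
    have ht1 : t + 1 ≠ 0 := by linarith
    have ht2 : t + 2 ≠ 0 := by linarith
    field_simp at hode ⊢
    linear_combination hode

lemma dFhyp_zero_right (ht : 1 ≤ t) : dFhyp t 0 = -(2 / (t + 1)) := by
  have hode := Fhyp_ode ht one_pos
  rw [Fhyp_zero_right ht] at hode
  have ht1 : t + 1 ≠ 0 := by linarith
  field_simp
  linarith

lemma antitoneOn_Fhyp (ht : 1 ≤ t) : AntitoneOn (Fhyp t) (Iio 1) :=
  antitoneOn_of_hasDerivWithinAt_nonpos (convex_Iio 1)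
    (fun _ hx => (hasDerivAt_Fhyp ht hx).continuousAt.continuousWithinAt)
    (fun _ hx => (hasDerivAt_Fhyp ht (mem_Iio.1 (interior_subset hx))).hasDerivWithinAt)
    fun _ hx => (dFhyp_neg ht (mem_Iio.1 (interior_subset hx))).le

lemma antitoneOn_dFhyp (ht : 1 ≤ t) : AntitoneOn (dFhyp t) (Iio 1) :=
  antitoneOn_of_hasDerivWithinAt_nonpos (convex_Iio 1)
    (fun _ hx => (hasDerivAt_dFhyp ht hx).continuousAt.continuousWithinAt)
    (fun _ hx => (hasDerivAt_dFhyp ht (mem_Iio.1 (interior_subset hx))).hasDerivWithinAt)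
    fun _ hx => d2Fhyp_nonpos ht (mem_Iio.1 (interior_subset hx))

lemma continuousOn_Fhyp (ht : 1 ≤ t) : ContinuousOn (Fhyp t) (Iic 1) := by
  rcases ht.eq_or_lt with rfl | ht
  · rw [funext Fhyp_one]
    fun_prop
  · exact continuousOn_hyper (aCoef_neg t).le (bCoef_pos t) (bCoef_lt_add_one ht)

end FhypRegularity

section ArgumentDerivatives

variable {t x : ℝ}

lemma neg_d2Fhyp_le (ht : 1 ≤ t) (h0 : 0 ≤ x) (hx : x < 1) : -d2Fhyp t x ≤ 8 / (1 - x) := by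
  set y := (1 + x) / 2 with hy
  have hxy : x ≤ y := by linarith
  have hy1 : y < 1 := by linarith
  have hanti : d2Fhyp t y ≤ d2Fhyp t x := antitoneOn_d2Fhyp ht hx hy1 hxy
  have hF : Fhyp t y ≤ 1 :=
    (antitoneOn_Fhyp ht (mem_Iio.2 one_pos) hy1 (by linarith)).trans_eq (Fhyp_zero_right ht)
  have hF' : (t + 1) * (1 - y) * dFhyp t y ≤ 0 :=
    mul_nonpos_of_nonneg_of_nonpos (by nlinarith) (dFhyp_neg ht hy1).le
  have hode := Fhyp_ode ht hy1
  have hd2 := d2Fhyp_nonpos ht hy1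
  have hmid : y * (1 - y) * -d2Fhyp t y ≤ 2 := by linarith
  have hxy' : (1 - x) * -d2Fhyp t y ≤ (1 + x) * (1 - x) * -d2Fhyp t y :=
    mul_le_mul_of_nonneg_right (by nlinarith) (neg_nonneg.2 hd2)
  rw [le_div_iff₀ (by linarith), mul_comm]
  calc (1 - x) * -d2Fhyp t x ≤ (1 - x) * -d2Fhyp t y :=
        mul_le_mul_of_nonneg_left (neg_le_neg hanti) (by linarith)
    _ ≤ (1 + x) * (1 - x) * -d2Fhyp t y := hxy'
    _ = 4 * (y * (1 - y) * -d2Fhyp t y) := by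
        rw [hy]
        ring
    _ ≤ 8 := by linarith

lemma neg_dFhyp_le (ht : 1 ≤ t) (h0 : 0 ≤ x) (hx : x < 1) :
    -dFhyp t x ≤ 1 - 8 * log (1 - x) := by
  have hderiv : ∀ z ∈ Ico (0 : ℝ) 1, HasDerivAt (fun z => dFhyp t z - 8 * log (1 - z))
      (d2Fhyp t z + 8 / (1 - z)) z := fun z hz => by
    have hlin : HasDerivAt (fun z : ℝ => 1 - z) (-1) z := (hasDerivAt_id z).const_sub 1
    exact ((hasDerivAt_dFhyp ht hz.2).sub ((hlin.log (sub_pos.2 hz.2).ne').const_mul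
      8)).congr_deriv (by ring)
  have hmono : MonotoneOn (fun z => dFhyp t z - 8 * log (1 - z)) (Ico 0 1) :=
    monotoneOn_of_hasDerivWithinAt_nonneg (convex_Ico 0 1)
      (fun z hz => (hderiv z hz).continuousAt.continuousWithinAt)
      (fun z hz => (hderiv z (interior_subset hz)).hasDerivWithinAt) fun z hz => by
        have hz' : z ∈ Ico (0 : ℝ) 1 := interior_subset hz
        linarith [neg_d2Fhyp_le ht hz'.1 hz'.2]
  have hle := hmono (left_mem_Ico.2 one_pos) ⟨h0, hx⟩ h0
  have ht2 : 2 / (t + 1) ≤ 1 := (div_le_one (by linarith)).2 (by linarith)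
  simp only [sub_zero, log_one, mul_zero, dFhyp_zero_right ht] at hle
  linarith

lemma abs_deriv_Fhyp_le (ht : 1 ≤ t) (hx : x ∈ Ico (0 : ℝ) 1) :
    |deriv (fun y => Fhyp t y) x| ≤ 8 + 8 * |log (1 - x)| := by
  rw [(hasDerivAt_Fhyp ht hx.2).deriv, abs_of_neg (dFhyp_neg ht hx.2)]
  linarith [neg_dFhyp_le ht hx.1 hx.2, neg_le_abs (log (1 - x))]

lemma abs_deriv_deriv_Fhyp_le (ht : 1 ≤ t) (hx : x ∈ Ico (0 : ℝ) 1) :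
    |deriv (deriv (fun y => Fhyp t y)) x| ≤ 8 / (1 - x) := by
  have hderiv : deriv (fun y => Fhyp t y) =ᶠ[nhds x] dFhyp t := by
    filter_upwards [Iio_mem_nhds hx.2] with y hy
    exact (hasDerivAt_Fhyp ht hy).deriv
  rw [hderiv.deriv_eq, (hasDerivAt_dFhyp ht hx.2).deriv, abs_of_nonpos (d2Fhyp_nonpos ht hx.2)]
  exact neg_d2Fhyp_le ht hx.1 hx.2

end ArgumentDerivatives

section MaximumPrinciple

lemma secondDeriv_nonpos_of_isLocalMax {f f' : ℝ → ℝ} {f'' z : ℝ} (hmax : IsLocalMax f z)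
    (hf : ∀ᶠ y in nhds z, HasDerivAt f (f' y) y) (hf' : HasDerivAt f' f'' z) : f'' ≤ 0 := by
  have hderiv : deriv f =ᶠ[nhds z] f' := hf.mono fun y hy => hy.deriv
  have hderiv2 : deriv (deriv f) z = f'' := hderiv.deriv_eq.trans hf'.deriv
  by_contra! hpos
  have hmin : IsLocalMin f z := isLocalMin_of_deriv_deriv_pos (hderiv2.symm ▸ hpos)
    hmax.deriv_eq_zero hf.self_of_nhds.continuousAt
  have hconst : f =ᶠ[nhds z] fun _ => f z := by
    filter_upwards [hmax, hmin] with y h₁ h₂ using le_antisymm h₁ h₂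
  have hzero : deriv (deriv f) z = 0 := by
    rw [hconst.deriv.deriv_eq]
    simp
  linarith

lemma exists_gt_of_deriv_neg {f : ℝ → ℝ} {f' x b : ℝ} (hf : HasDerivAt f f' b) (hf' : f' < 0)
    (hxb : x < b) : ∃ y ∈ Ioo x b, f b < f y := by
  have hslope := (hasDerivAt_iff_tendsto_slope.1 hf).eventually_lt_const hf'
  have hleft : ∀ᶠ y in nhdsWithin b (Iio b), slope f b y < 0 :=
    hslope.filter_mono (nhdsWithin_mono b fun y hy => ne_of_lt hy)
  obtain ⟨y, hy, hyIoo⟩ := (hleft.and (Ioo_mem_nhdsLT hxb)).exists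
  refine ⟨y, hyIoo, ?_⟩
  rw [slope_def_field, div_neg_iff] at hy
  rcases hy with h | h <;> linarith [hyIoo.2]

/-- If `D x ≤ 0`, then `D`, being positive just to the left of `b`, has a positive interior maximum,
where `D' = 0` and `D'' ≤ 0`. -/
lemma pos_of_forall_critical_pos {D D' D'' : ℝ → ℝ} {x b : ℝ} (hxb : x < b)
    (hD : ∀ y ∈ Icc x b, HasDerivAt D (D' y) y) (hD' : ∀ y ∈ Ioo x b, HasDerivAt D' (D'' y) y)
    (hb : D b = 0) (hb' : D' b < 0) (hcrit : ∀ y ∈ Ioo x b, 0 < D y → D' y = 0 → 0 < D'' y) :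
    0 < D x := by
  by_contra! hx
  obtain ⟨y, hy, hDy⟩ := exists_gt_of_deriv_neg (hD b (right_mem_Icc.2 hxb.le)) hb' hxb
  obtain ⟨z, hz, hmax⟩ := isCompact_Icc.exists_isMaxOn (nonempty_Icc.2 hxb.le)
    fun y hy => (hD y hy).continuousAt.continuousWithinAt
  have hDz : 0 < D z := (hb ▸ hDy).trans_le (hmax (Ioo_subset_Icc_self hy))
  have hzIoo : z ∈ Ioo x b := by
    refine ⟨hz.1.lt_of_ne ?_, hz.2.lt_of_ne ?_⟩ <;> rintro rfl <;> linarith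
  have hloc : IsLocalMax D z := hmax.isLocalMax (Icc_mem_nhds hzIoo.1 hzIoo.2)
  have hzero : D' z = 0 := hloc.hasDerivAt_eq_zero (hD z hz)
  have hev : ∀ᶠ y in nhds z, HasDerivAt D (D' y) y := by
    filter_upwards [Icc_mem_nhds hzIoo.1 hzIoo.2] using hD
  exact (hcrit z hzIoo hDz hzero).not_ge
    (secondDeriv_nonpos_of_isLocalMax hloc hev (hD' z hzIoo))

end MaximumPrinciple

section NegativeArgument

variable {s t x : ℝ}

lemma Fhyp_lt_Fhyp_of_neg (ht : 1 ≤ t) (hts : t < s) (hx : x < 0) : Fhyp s x < Fhyp t x := by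
  have hs : 1 ≤ s := ht.trans hts.le
  refine sub_pos.1 (pos_of_forall_critical_pos (D := fun z => Fhyp t z - Fhyp s z)
    (D' := fun z => dFhyp t z - dFhyp s z) (D'' := fun z => d2Fhyp t z - d2Fhyp s z) hx
    (fun z hz => ?_) (fun z hz => ?_) ?_ ?_ fun z hz hDz hcrit => ?_)
  · have hz1 : z < 1 := by linarith [hz.2]
    exact (hasDerivAt_Fhyp ht hz1).sub (hasDerivAt_Fhyp hs hz1)
  · have hz1 : z < 1 := by linarith [hz.2]
    exact (hasDerivAt_dFhyp ht hz1).sub (hasDerivAt_dFhyp hs hz1)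
  · rw [Fhyp_zero_right ht, Fhyp_zero_right hs, sub_self]
  · have : 2 / (s + 1) < 2 / (t + 1) :=
      div_lt_div_of_pos_left two_pos (by linarith) (by linarith)
    rw [dFhyp_zero_right ht, dFhyp_zero_right hs]
    linarith
  · have hz0 : z < 0 := hz.2
    have hz1 : z < 1 := by linarith
    have heq : z * (1 - z) * (d2Fhyp t z - d2Fhyp s z) =
        (s - t) * (1 - z) * dFhyp t z - 2 * (Fhyp t z - Fhyp s z) := by
      linear_combination Fhyp_ode ht hz1 - Fhyp_ode hs hz1 - (s + 1) * (1 - z) * hcrit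
    have hneg : (s - t) * (1 - z) * dFhyp t z < 0 :=
      mul_neg_of_pos_of_neg (mul_pos (by linarith) (by linarith)) (dFhyp_neg ht hz1)
    exact pos_of_mul_neg_right (a := z * (1 - z)) (by linarith)
      (mul_nonpos_of_nonpos_of_nonneg hz0.le (by linarith))

lemma two_div_add_one_sub_two_div_add_one_lt (ht : 1 ≤ t) (hts : t < s) :
    2 / (t + 1) - 2 / (s + 1) < (s - t) * (2 / (t + 1) ^ 2) := by
  have hs1 : 0 < s + 1 := by linarith
  have : 0 < t + 1 := by linarith
  calc 2 / (t + 1) - 2 / (s + 1) = (s - t) * (2 / ((t + 1) * (s + 1))) := by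
        field_simp
        ring
    _ < (s - t) * (2 / (t + 1) ^ 2) := by
        rw [sq]
        have := sub_pos.2 hts
        gcongr

lemma two_div_sq_mul_add_dFhyp_pos (ht : 1 ≤ t) (hts : t < s) (hx : x < 0) :
    0 < 2 / (t + 1) ^ 2 * ((s + 1) * Fhyp t x + (2 + (s - t)) * (x * dFhyp t x)) +
      dFhyp t x := by
  have : 0 < t + 1 := by linarith
  have hF : 1 ≤ Fhyp t x := (Fhyp_zero_right ht).symm.trans_le
    (antitoneOn_Fhyp ht (hx.trans one_pos) (mem_Iio.2 one_pos) hx.le)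
  have hdF : -(2 / (t + 1)) ≤ dFhyp t x := (dFhyp_zero_right ht).symm.trans_le
    (antitoneOn_dFhyp ht (hx.trans one_pos) (mem_Iio.2 one_pos) hx.le)
  have hxdF : 0 < (2 + (s - t)) * (x * dFhyp t x) :=
    mul_pos (by linarith) (mul_pos_of_neg_of_neg hx (dFhyp_neg ht (hx.trans one_pos)))
  have : t + 1 < (s + 1) * Fhyp t x + (2 + (s - t)) * (x * dFhyp t x) := by nlinarith
  calc 0 = 2 / (t + 1) ^ 2 * (t + 1) + -(2 / (t + 1)) := by
        field_simp
        ring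
    _ < 2 / (t + 1) ^ 2 * ((s + 1) * Fhyp t x + (2 + (s - t)) * (x * dFhyp t x)) +
          dFhyp t x :=
        add_lt_add_of_lt_of_le (mul_lt_mul_of_pos_left this (by positivity)) hdF

lemma Fhyp_sub_Fhyp_lt (ht : 1 ≤ t) (hts : t < s) (hx : x < 0) :
    Fhyp t x - Fhyp s x < -2 * x * Fhyp t x / (t + 1) ^ 2 * (s - t) := by
  have hs : 1 ≤ s := ht.trans hts.le
  have hst : 0 < s - t := sub_pos.2 hts
  set L := 2 / (t + 1) ^ 2
  suffices 0 < (s - t) * L * (-x * Fhyp t x) - (Fhyp t x - Fhyp s x) by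
    rw [← sub_pos]
    convert! this using 2
    ring
  refine pos_of_forall_critical_pos
    (D := fun z => (s - t) * L * (-z * Fhyp t z) - (Fhyp t z - Fhyp s z))
    (D' := fun z => (s - t) * L * (-1 * Fhyp t z + -z * dFhyp t z) - (dFhyp t z - dFhyp s z))
    (D'' := fun z => (s - t) * L * (-1 * dFhyp t z + (-1 * dFhyp t z + -z * d2Fhyp t z)) -
      (d2Fhyp t z - d2Fhyp s z)) hx
    (fun z hz => ?_) (fun z hz => ?_) ?_ ?_ fun z hz hDz hcrit => ?_
  · have hz1 : z < 1 := by linarith [hz.2]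
    exact (((hasDerivAt_neg z).mul (hasDerivAt_Fhyp ht hz1)).const_mul _).sub
      ((hasDerivAt_Fhyp ht hz1).sub (hasDerivAt_Fhyp hs hz1))
  · have hz1 : z < 1 := by linarith [hz.2]
    exact ((((hasDerivAt_Fhyp ht hz1).const_mul (-1)).add
      ((hasDerivAt_neg z).mul (hasDerivAt_dFhyp ht hz1))).const_mul _).sub
      ((hasDerivAt_dFhyp ht hz1).sub (hasDerivAt_dFhyp hs hz1))
  · simp [Fhyp_zero_right ht, Fhyp_zero_right hs]
  · have := two_div_add_one_sub_two_div_add_one_lt ht hts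
    simp only [neg_zero, zero_mul, Fhyp_zero_right ht, dFhyp_zero_right ht, dFhyp_zero_right hs]
    linarith
  · have hz0 : z < 0 := hz.2
    have hz1 : z < 1 := by linarith
    have heq : z * (1 - z) * ((s - t) * L * (-1 * dFhyp t z + (-1 * dFhyp t z + -z * d2Fhyp t z)) -
          (d2Fhyp t z - d2Fhyp s z)) =
        -2 * ((s - t) * L * (-z * Fhyp t z) - (Fhyp t z - Fhyp s z)) - (1 - z) * ((s - t) *
          (L * ((s + 1) * Fhyp t z + (2 + (s - t)) * (z * dFhyp t z)) + dFhyp t z)) := by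
      linear_combination (-(s - t) * L * z - 1) * Fhyp_ode ht hz1 + Fhyp_ode hs hz1 -
        (s + 1) * (1 - z) * hcrit
    have hpos := mul_pos (sub_pos.2 hz1) (mul_pos hst (two_div_sq_mul_add_dFhyp_pos ht hts hz0))
    exact pos_of_mul_neg_right (a := z * (1 - z)) (by linarith)
      (mul_nonpos_of_nonpos_of_nonneg hz0.le (by linarith))

lemma abs_deriv_le_of_forall_gt {f : ℝ → ℝ} {C : ℝ} (hC : 0 ≤ C)
    (hf : ∀ s, t < s → |f s - f t| ≤ C * (s - t)) : |deriv f t| ≤ C := by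
  by_cases hd : DifferentiableAt ℝ f t
  · have hslope : Filter.Tendsto (slope f t) (nhdsWithin t (Ioi t)) (nhds (deriv f t)) :=
      (hasDerivAt_iff_tendsto_slope.1 hd.hasDerivAt).mono_left
        (nhdsWithin_mono _ fun s hs => ne_of_gt hs)
    refine le_of_tendsto hslope.abs ?_
    filter_upwards [self_mem_nhdsWithin] with s hs
    have hts : 0 < s - t := sub_pos.2 hs
    rw [slope_def_field, abs_div, abs_of_pos hts, div_le_iff₀ hts]
    exact hf s hs
  · rwa [deriv_zero_of_not_differentiableAt hd, abs_zero]

lemma abs_deriv_Fhyp_parameter_le_of_nonpos (ht : 1 ≤ t) (hx : x ≤ 0) :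
    |deriv (fun s => Fhyp s x) t| ≤ -2 * x * Fhyp t x / (t + 1) ^ 2 := by
  have hF := Fhyp_pos ht (hx.trans_lt one_pos)
  refine abs_deriv_le_of_forall_gt
    (div_nonneg (mul_nonneg (by linarith) hF.le) (by positivity)) fun s hts => ?_
  rcases hx.eq_or_lt with rfl | hx
  · simp [Fhyp_zero_right ht, Fhyp_zero_right (ht.trans hts.le)]
  · rw [abs_sub_comm, abs_of_pos (sub_pos.2 (Fhyp_lt_Fhyp_of_neg ht hts hx))]
    exact (Fhyp_sub_Fhyp_lt ht hts hx).le

end NegativeArgument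

section PositiveArgument

/-- The ratio of the `(j + 1)`-st to the `j`-th partial sum of the Taylor coefficients of `F_t`,
that is `(a_t + 1 + j) (b_t + 1 + j) / ((c_t + j) (j + 1))`. -/
noncomputable def quotFactor (t : ℝ) (j : ℕ) : ℝ := 1 - 2 / ((j + 1) * (j + 1 + t))

/-- The `k`-th Taylor coefficient of `F_t(x) / (1 - x) = F(a_t + 1, b_t + 1; c_t; x)`, that is, the
`k`-th partial sum of the Taylor coefficients of `F_t`. -/
noncomputable def quotCoeff (t : ℝ) (k : ℕ) : ℝ := ∏ j ∈ Finset.range k, quotFactor t j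

variable {s t x : ℝ}

lemma quotFactor_zero (t : ℝ) : quotFactor t 0 = 1 - 2 / (1 + t) := by simp [quotFactor]

lemma quotFactor_mono (ht : 1 ≤ t) (hts : t ≤ s) (j : ℕ) : quotFactor t j ≤ quotFactor s j := by
  have : 0 < j + 1 + t := by positivity
  unfold quotFactor
  gcongr

lemma quotFactor_nonneg (ht : 1 ≤ t) (j : ℕ) : 0 ≤ quotFactor t j := by
  refine le_trans ?_ (quotFactor_mono le_rfl ht j)
  have : (0 : ℝ) ≤ j := j.cast_nonneg
  rw [quotFactor, sub_nonneg, div_le_one (by positivity)]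
  nlinarith

lemma quotFactor_le_one (ht : 1 ≤ t) (j : ℕ) : quotFactor t j ≤ 1 :=
  sub_le_self 1 (by positivity)

lemma hyperCoeff_eq_quotCoeff (ht : 1 ≤ t) (k : ℕ) :
    hyperCoeff (aCoef t + 1) (bCoef t + 1) (t + 1) k = quotCoeff t k := by
  rw [hyperCoeff_eq_prod, quotCoeff]
  refine Finset.prod_congr rfl fun j _ => ?_
  have : (t + 1 + j) * (j + 1) ≠ 0 := by positivity
  have : (j + 1) * (j + 1 + t) ≠ 0 := by positivity
  rw [quotFactor]
  field_simp
  linear_combination (j + 1 + t) * (aCoef_mul_bCoef t + (1 + j) * aCoef_add_bCoef t)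

lemma hasSum_quotCoeff (ht : 1 ≤ t) (hx : |x| < 1) :
    HasSum (fun k => quotCoeff t k * x ^ k) (Fhyp t x * (1 - x)⁻¹) :=
  (hasSum_sum_range_mul_pow (hasSum_Fhyp ht hx) hx).congr_fun fun k => by
    rw [sum_range_hyperCoeff (by linarith) (by rw [aCoef_add_bCoef]), hyperCoeff_eq_quotCoeff ht]

lemma mul_le_Fhyp_sub_Fhyp {η : ℝ} (ht : 1 ≤ t) (hs : 1 ≤ s) (hx : x ∈ Icc (0 : ℝ) 1)
    (hη : ∀ k, η ≤ quotCoeff s (k + 1) - quotCoeff t (k + 1)) :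
    η * x ≤ Fhyp s x - Fhyp t x := by
  have hlt : ∀ y ∈ Ico (0 : ℝ) 1, η * y ≤ Fhyp s y - Fhyp t y := fun y hy => by
    have hy1 : |y| < 1 := (abs_of_nonneg hy.1).trans_lt hy.2
    have hdiff := (hasSum_nat_add_iff' 1).2
      ((hasSum_quotCoeff hs hy1).sub (hasSum_quotCoeff ht hy1))
    have hgeom := (hasSum_geometric_of_abs_lt_one hy1).mul_left (η * y)
    have hle := hasSum_le (fun k => ?_) hgeom hdiff
    · rw [Finset.sum_range_one, quotCoeff, quotCoeff, Finset.prod_range_zero,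
        Finset.prod_range_zero, sub_self, sub_zero, ← sub_mul] at hle
      exact le_of_mul_le_mul_right hle (inv_pos.2 (sub_pos.2 hy.2))
    · rw [mul_assoc, ← pow_succ', ← sub_mul]
      exact mul_le_mul_of_nonneg_right (hη k) (pow_nonneg hy.1 _)
  have hcont : ∀ {u : ℝ}, 1 ≤ u → ContinuousWithinAt (Fhyp u) (Ico 0 1) x := fun hu =>
    (continuousOn_Fhyp hu x hx.2).mono fun y hy => hy.2.le
  exact ContinuousWithinAt.closure_le (by rwa [closure_Ico zero_ne_one])
    (by fun_prop) ((hcont hs).sub (hcont ht)) hlt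

lemma prod_quotFactor_one (k : ℕ) :
    ∏ j ∈ Finset.range k, quotFactor 1 (j + 1) = (k + 3) / (3 * (k + 1)) := by
  induction k with
  | zero => norm_num
  | succ k ih =>
    rw [Finset.prod_range_succ, ih, quotFactor]
    push_cast
    field_simp
    ring

lemma one_third_le_prod_quotFactor (ht : 1 ≤ t) (k : ℕ) :
    1 / 3 ≤ ∏ j ∈ Finset.range k, quotFactor t (j + 1) :=
  calc (1 / 3 : ℝ) ≤ (k + 3) / (3 * (k + 1)) := by
        rw [div_le_div_iff₀ (by norm_num) (by positivity)]
        linarith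
    _ = ∏ j ∈ Finset.range k, quotFactor 1 (j + 1) := (prod_quotFactor_one k).symm
    _ ≤ ∏ j ∈ Finset.range k, quotFactor t (j + 1) :=
        Finset.prod_le_prod (fun _ _ => quotFactor_nonneg le_rfl _)
          fun _ _ => quotFactor_mono le_rfl ht _

lemma le_quotCoeff_sub_quotCoeff (ht : 1 ≤ t) (hts : t ≤ s) (k : ℕ) :
    (2 / (1 + t) - 2 / (1 + s)) / 3 ≤ quotCoeff s (k + 1) - quotCoeff t (k + 1) := by
  have hhead : 0 ≤ 2 / (1 + t) - 2 / (1 + s) := sub_nonneg.2 (by gcongr)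
  have htail := one_third_le_prod_quotFactor (ht.trans hts) k
  have hmono : ∏ j ∈ Finset.range k, quotFactor t (j + 1) ≤
      ∏ j ∈ Finset.range k, quotFactor s (j + 1) :=
    Finset.prod_le_prod (fun _ _ => quotFactor_nonneg ht _) fun _ _ => quotFactor_mono ht hts _
  have hdiff := mul_le_mul_of_nonneg_right hmono (quotFactor_nonneg ht 0)
  have hfirst := mul_le_mul_of_nonneg_left htail hhead
  rw [quotCoeff, quotCoeff, Finset.prod_range_succ', Finset.prod_range_succ']
  rw [quotFactor_zero] at hdiff ⊢
  rw [quotFactor_zero]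
  linarith

lemma Fhyp_lt_Fhyp_of_pos (ht : 1 ≤ t) (hts : t < s) (hx : x ∈ Ioc (0 : ℝ) 1) :
    Fhyp t x < Fhyp s x := by
  have hdiv : 2 / (1 + s) < 2 / (1 + t) := by gcongr
  have hle := mul_le_Fhyp_sub_Fhyp ht (ht.trans hts.le) (Ioc_subset_Icc_self hx)
    (le_quotCoeff_sub_quotCoeff ht hts.le)
  have hpos : 0 < (2 / (1 + t) - 2 / (1 + s)) / 3 * x := mul_pos (by linarith) hx.1
  linarith

lemma abs_prod_sub_prod_le {ι : Type*} (s : Finset ι) {f g : ι → ℝ} (hf : ∀ i, |f i| ≤ 1)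
    (hg : ∀ i, |g i| ≤ 1) : |∏ i ∈ s, f i - ∏ i ∈ s, g i| ≤ ∑ i ∈ s, |f i - g i| := by
  induction s using Finset.cons_induction with
  | empty => simp
  | cons i s hi ih =>
    have hprod : |∏ j ∈ s, g j| ≤ 1 := by
      rw [Finset.abs_prod]
      exact Finset.prod_le_one (fun _ _ => abs_nonneg _) fun j _ => hg j
    rw [Finset.prod_cons, Finset.prod_cons, Finset.sum_cons]
    calc |f i * ∏ j ∈ s, f j - g i * ∏ j ∈ s, g j|
        = |(f i - g i) * ∏ j ∈ s, g j + f i * (∏ j ∈ s, f j - ∏ j ∈ s, g j)| := by ring_nf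
      _ ≤ |f i - g i| * |∏ j ∈ s, g j| + |f i| * |∏ j ∈ s, f j - ∏ j ∈ s, g j| := by
        rw [← abs_mul, ← abs_mul]
        exact abs_add_le _ _
      _ ≤ |f i - g i| * 1 + 1 * ∑ j ∈ s, |f j - g j| := by
        have := hf i
        gcongr
      _ = |f i - g i| + ∑ j ∈ s, |f j - g j| := by rw [mul_one, one_mul]

lemma abs_quotFactor_sub_quotFactor_le (ht : 0 < t) (hts : t ≤ s + 1) (j : ℕ) :
    |quotFactor s j - quotFactor t j| ≤
      2 * |s - t| / t ^ 2 * (1 / (j + 1) - 1 / (j + 1 + t)) := by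
  have : (0 : ℝ) ≤ j := j.cast_nonneg
  have hjs : t ≤ j + 1 + s := by linarith
  have hjs0 : 0 < j + 1 + s := ht.trans_le hjs
  have hden : 0 < (j + 1) * (j + 1 + t) * (j + 1 + s) := by positivity
  have heq : quotFactor s j - quotFactor t j =
      2 * (s - t) / ((j + 1) * (j + 1 + t) * (j + 1 + s)) := by
    rw [quotFactor, quotFactor]
    field_simp
    ring
  rw [heq, abs_div, abs_mul, abs_two, abs_of_pos hden]
  calc 2 * |s - t| / ((j + 1) * (j + 1 + t) * (j + 1 + s))
      ≤ 2 * |s - t| / ((j + 1) * (j + 1 + t) * t) := by gcongr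
    _ = 2 * |s - t| / t ^ 2 * (1 / (j + 1) - 1 / (j + 1 + t)) := by
        field_simp
        ring

lemma sum_one_div_sub_one_div_add_le (ht : 1 ≤ t) (k : ℕ) :
    ∑ j ∈ Finset.range k, (1 / ((j : ℝ) + 1) - 1 / (j + 1 + t)) ≤ 1 + log (t + 1) := by
  set n := ⌈t⌉₊
  have hn : (0 : ℝ) < n := Nat.cast_pos.2 (Nat.ceil_pos.2 (by linarith))
  have hharm : ∑ j ∈ Finset.range n, 1 / ((j : ℝ) + 1) ≤ 1 + log n := by
    simpa [harmonic] using harmonic_le_one_add_log n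
  have hmono : ∑ j ∈ Finset.range k, 1 / ((j : ℝ) + 1) ≤
      ∑ j ∈ Finset.range (n + k), 1 / ((j : ℝ) + 1) :=
    Finset.sum_le_sum_of_subset_of_nonneg (Finset.range_mono (Nat.le_add_left k n))
      fun _ _ _ => by positivity
  have htail : ∑ j ∈ Finset.range k, 1 / (((n + j : ℕ) : ℝ) + 1) ≤
      ∑ j ∈ Finset.range k, 1 / ((j : ℝ) + 1 + t) := by
    refine Finset.sum_le_sum fun j _ => ?_
    have := Nat.le_ceil t
    push_cast
    exact one_div_le_one_div_of_le (by positivity) (by linarith)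
  have hlog : log n ≤ log (t + 1) := log_le_log hn (Nat.ceil_lt_add_one (by linarith)).le
  rw [Finset.sum_range_add] at hmono
  rw [Finset.sum_sub_distrib]
  linarith

lemma one_add_log_add_one_le (ht : 2 ≤ t) : 1 + log (t + 1) ≤ 4 * log t := by
  have hlog2 : 1 / 2 ≤ log t := by linarith [log_two_gt_d9, log_le_log two_pos ht]
  have hsq : log (t + 1) ≤ 2 * log t := by
    rw [← log_rpow (by linarith), rpow_two]
    exact log_le_log (by linarith) (by nlinarith)
  linarith

lemma abs_quotCoeff_sub_quotCoeff_le (ht : 2 ≤ t) (hts : t ≤ s + 1) (k : ℕ) :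
    |quotCoeff s k - quotCoeff t k| ≤ 8 * log t / t ^ 2 * |s - t| := by
  have habs : ∀ {u : ℝ}, 1 ≤ u → ∀ j, |quotFactor u j| ≤ 1 := fun hu j => by
    rw [abs_of_nonneg (quotFactor_nonneg hu j)]
    exact quotFactor_le_one hu j
  calc |quotCoeff s k - quotCoeff t k|
      ≤ ∑ j ∈ Finset.range k, |quotFactor s j - quotFactor t j| :=
        abs_prod_sub_prod_le _ (habs (by linarith)) (habs (by linarith))
    _ ≤ ∑ j ∈ Finset.range k, 2 * |s - t| / t ^ 2 * (1 / ((j : ℝ) + 1) - 1 / (j + 1 + t)) :=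
        Finset.sum_le_sum fun j _ => abs_quotFactor_sub_quotFactor_le (by linarith) hts j
    _ ≤ 2 * |s - t| / t ^ 2 * (4 * log t) := by
        rw [← Finset.mul_sum]
        gcongr
        exact (sum_one_div_sub_one_div_add_le (by linarith) k).trans (one_add_log_add_one_le ht)
    _ = 8 * log t / t ^ 2 * |s - t| := by ring

lemma abs_Fhyp_sub_Fhyp_le (ht : 2 ≤ t) (hts : t ≤ s + 1) (hx : x ∈ Icc (0 : ℝ) 1) :
    |Fhyp s x - Fhyp t x| ≤ 8 * log t / t ^ 2 * |s - t| := by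
  set M := 8 * log t / t ^ 2 * |s - t|
  have hcoeff k := abs_le.1 (abs_quotCoeff_sub_quotCoeff_le ht hts (k + 1))
  have hM : M * x ≤ M :=
    mul_le_of_le_one_right ((abs_nonneg _).trans (abs_quotCoeff_sub_quotCoeff_le ht hts 0)) hx.2
  have hlower := mul_le_Fhyp_sub_Fhyp (by linarith) (by linarith) hx fun k => (hcoeff k).1
  have hupper : -M * x ≤ Fhyp t x - Fhyp s x :=
    mul_le_Fhyp_sub_Fhyp (by linarith) (by linarith) hx fun k => by linarith [(hcoeff k).2]
  rw [abs_le]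
  constructor <;> linarith

lemma abs_deriv_Fhyp_parameter_le_of_nonneg (ht : 2 ≤ t) (hx : x ∈ Icc (0 : ℝ) 1) :
    |deriv (fun s => Fhyp s x) t| ≤ 8 * log t / t ^ 2 := by
  have hlog : 0 ≤ log t := log_nonneg (by linarith)
  refine norm_deriv_le_of_lip' (f := fun s => Fhyp s x) (by positivity) ?_
  filter_upwards [Ioi_mem_nhds (sub_one_lt t)] with s hs
  exact abs_Fhyp_sub_Fhyp_le ht (sub_le_iff_le_add.1 (mem_Ioi.1 hs).le) hx

end PositiveArgument

theorem Fhyp_parameter_derivative_bounds_general :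
    (∀ x ∈ Ioc (0 : ℝ) 1, StrictMonoOn (fun t => Fhyp t x) (Ici 1)) ∧
    (∀ x < 0, StrictAntiOn (fun t => Fhyp t x) (Ici 1)) ∧
    (∀ t ≥ 1, ∀ x ≤ 0, |deriv (fun s => Fhyp s x) t| ≤ -2 * x * Fhyp t x / (t + 1) ^ 2) ∧
    (∀ t ≥ 1, ∀ x ∈ Ico (0 : ℝ) 1, |deriv (fun y => Fhyp t y) x| ≤ 8 + 8 * |log (1 - x)|) ∧
    (∀ t ≥ 2, ∀ x ∈ Icc (0 : ℝ) 1, |deriv (fun s => Fhyp s x) t| ≤ 8 * log t / t ^ 2) ∧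
    (∀ t ≥ 1, ∀ x ∈ Ico (0 : ℝ) 1, |deriv (deriv (fun y => Fhyp t y)) x| ≤ 8 / (1 - x)) :=
  ⟨fun _ hx _ ht _ _ hts => Fhyp_lt_Fhyp_of_pos ht hts hx,
    fun _ hx _ ht _ _ hts => Fhyp_lt_Fhyp_of_neg ht hts hx,
    fun _ ht _ hx => abs_deriv_Fhyp_parameter_le_of_nonpos ht hx,
    fun _ ht _ hx => abs_deriv_Fhyp_le ht hx,
    fun _ ht _ hx => abs_deriv_Fhyp_parameter_le_of_nonneg ht hx,
    fun _ ht _ hx => abs_deriv_deriv_Fhyp_le ht hx⟩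

/-- monotonicity in the parameter `t` and quantitative bounds for the
derivatives of `F_t(x) = F(a_t,b_t;c_t;x)` in the parameter and in the argument. -/
theorem Fhyp_parameter_derivative_bounds :
    -- (1) monotonicity in the parameter
    (∀ x : ℝ, x ∈ Ioc (0:ℝ) 1 → StrictMonoOn (fun t : ℝ => Fhyp t x) (Ici 1)) ∧
    (∀ x : ℝ, x < 0 → StrictAntiOn (fun t : ℝ => Fhyp t x) (Ici 1)) ∧
    -- (2) bound on the parameter derivative for `x ≤ 0`
    (∀ t : ℝ, 1 ≤ t → ∀ x : ℝ, x ≤ 0 →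
      |deriv (fun s : ℝ => Fhyp s x) t| ≤ -2 * x * Fhyp t x / (t + 1) ^ 2) ∧
    -- (3) logarithmic bound on `∂ₓF`
    (∃ C : ℝ, 0 < C ∧ ∀ n : ℕ, 2 ≤ n → ∀ x ∈ Ico (0:ℝ) 1,
      |deriv (fun y : ℝ => Fhyp n y) x| ≤ C + C * |Real.log (1 - x)|) ∧
    -- (4) bound on the parameter derivative at integers, uniformly for `x ∈ [0,1]`
    (∃ C : ℝ, 0 < C ∧ ∀ n : ℕ, 2 ≤ n → ∀ x ∈ Icc (0:ℝ) 1,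
      |deriv (fun t : ℝ => Fhyp t x) n| ≤ C * Real.log n / (n : ℝ) ^ 2) ∧
    -- (5) bound on the second derivative in `x`
    (∃ C : ℝ, 0 < C ∧ ∀ n : ℕ, 2 ≤ n → ∀ x ∈ Ico (0:ℝ) 1,
      |deriv (deriv (fun y : ℝ => Fhyp n y)) x| ≤ C / (1 - x)) := by
  obtain ⟨hmono, hanti, hneg, hderiv, hparam, hderiv2⟩ := Fhyp_parameter_derivative_bounds_general
  have htwo {n : ℕ} (hn : 2 ≤ n) : (2 : ℝ) ≤ n := by exact_mod_cast hn
  exact ⟨hmono, hanti, hneg,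
    ⟨8, by norm_num, fun n hn => hderiv n (one_le_two.trans (htwo hn))⟩,
    ⟨8, by norm_num, fun n hn => hparam n (htwo hn)⟩,
    ⟨8, by norm_num, fun n hn => hderiv2 n (one_le_two.trans (htwo hn))⟩⟩
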